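/- Let D ⊆ Δ⁺ be a basic subset with diagram as defined and C(D) = {ξ_1 ≻ … ≻ ξ_c}. Then: (a) w_D = r_{ξ_1} ∘ r_{ξ_2} ∘ ⋯ ∘ r_{ξ_c}; (b) w_i(ξ_j) > 0 for all 1 ≤ i < j ≤ c; (c) ξ_j ∉ M(D) for all 1 ≤ j ≤ c; (d) for each j, ξ_j is the ≻-greatest positive root ξ such that ξ ≺ ξ_{j−1} (no such constraint when j = 1), ξ ∉ M(D), and w_i(ξ) > 0 for all 1 ≤ i < j. -/

import Mathlib

/-- A positive root `(i,j)`: `n ≥ i > j ≥ 1`. -/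
def IsPosRoot (n : ℕ) (γ : ℕ × ℕ) : Prop := 1 ≤ γ.2 ∧ γ.2 < γ.1 ∧ γ.1 ≤ n

/-- `γ` is the sum of the roots `α` and `β` (in either order):
`(i,j) + (j,k) = (i,k)`. -/
def RootSum (α β γ : ℕ × ℕ) : Prop :=
  (α.2 = β.1 ∧ γ = (α.1, β.2)) ∨ (β.2 = α.1 ∧ γ = (β.1, α.2))

/-- A basic subset: a set of positive roots with at most one root in each
row and at most one root in each column. -/
def IsBasic (n : ℕ) (D : Set (ℕ × ℕ)) : Prop :=
  (∀ γ ∈ D, IsPosRoot n γ) ∧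
  (∀ α ∈ D, ∀ β ∈ D, α.1 = β.1 → α = β) ∧
  (∀ α ∈ D, ∀ β ∈ D, α.2 = β.2 → α = β)

/-- A positive root `α` is `D`-singular if `α + β ∈ D` for some positive root `β`. -/
def IsSingular (n : ℕ) (D : Set (ℕ × ℕ)) (α : ℕ × ℕ) : Prop :=
  IsPosRoot n α ∧ ∃ β γ, IsPosRoot n β ∧ RootSum α β γ ∧ γ ∈ D

/-- `M(D) = R(D) \ D`, where `R(D)` is the set of `D`-regular positive roots. -/
def MD (n : ℕ) (D : Set (ℕ × ℕ)) : Set (ℕ × ℕ) :=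
  {γ | IsPosRoot n γ ∧ ¬ IsSingular n D γ ∧ γ ∉ D}
/-- The list `[w_D(1), …, w_D(j)]`, defined recursively: `w_D(j)` is the
greatest `i ∈ {1,…,n}` with `(i,j) ∉ M(D)` and `i ∉ {w_D(1),…,w_D(j-1)}`. -/
noncomputable def wDVals (n : ℕ) (D : Set (ℕ × ℕ)) : ℕ → List ℕ
  | 0 => []
  | j + 1 =>
    let prev := wDVals n D j
    prev ++ [sSup {i | 1 ≤ i ∧ i ≤ n ∧ (i, j + 1) ∉ MD n D ∧ i ∉ prev}]

/-- The permutation `w_D` associated with a basic subset `D` (as a map `ℕ → ℕ`,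
meaningful on `{1,…,n}`). -/
noncomputable def wD (n : ℕ) (D : Set (ℕ × ℕ)) (j : ℕ) : ℕ :=
  ((wDVals n D j).getLast?).getD 0
open scoped Classical

/-- Marks used in the diagram of a basic subset. -/
inductive Mark : Type
  | otimes : Mark
  | plus : Mark
  | minus : Mark
  | bullet : Mark
deriving DecidableEq

/-- A marking state of the diagram: a partial assignment of marks to places. -/
abbrev MState : Type := ℕ × ℕ → Option Mark

/-- Step 0 of the diagram construction: every root of `M(D)` is marked `•`. -/
noncomputable def initMark (n : ℕ) (D : Set (ℕ × ℕ)) : MState :=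
  fun γ => if γ ∈ MD n D then some Mark.bullet else none

/-- One step of the diagram construction: mark `ξ` with `⊗`, and for every
decomposition `ξ = α + β` with `col α = col ξ`, `row β = row ξ` and both
`α`, `β` unmarked, mark `α` with `+` and `β` with `−`. -/
noncomputable def markStep (s : MState) (ξ : ℕ × ℕ) : MState :=
  fun γ =>
    if γ = ξ then some Mark.otimes
    else if γ.2 = ξ.2 ∧ ξ.2 < γ.1 ∧ γ.1 < ξ.1 ∧ s γ = none ∧ s (ξ.1, γ.1) = none then
      some Mark.plus
    else if γ.1 = ξ.1 ∧ ξ.2 < γ.2 ∧ γ.2 < ξ.1 ∧ s γ = none ∧ s (γ.2, ξ.2) = none then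
      some Mark.minus
    else s γ

/-- The list of all positive roots in decreasing order with respect to `≻`
(`(k,m) ≻ (i,j)` iff `m < j`, or `m = j` and `k > i`). -/
def rootList (n : ℕ) : List (ℕ × ℕ) :=
  (List.range n).flatMap (fun j0 =>
    (List.range n).filterMap (fun k =>
      if j0 + 1 < n - k then some (n - k, j0 + 1) else none))

/-- Run the diagram construction along a list of places, recording at each
step `i` the pair (`ξ_i`, state after step `i`). -/
noncomputable def diagRun (s : MState) : List (ℕ × ℕ) → List ((ℕ × ℕ) × MState)
  | [] => []
  | ξ :: rest =>
    if s ξ = none then (ξ, markStep s ξ) :: diagRun (markStep s ξ) rest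
    else diagRun s rest

/-- The full run of the diagram construction for a basic subset `D`. -/
noncomputable def diagSeq (n : ℕ) (D : Set (ℕ × ℕ)) : List ((ℕ × ℕ) × MState) :=
  diagRun (initMark n D) (rootList n)

/-- `c`, the number of steps (= number of `⊗` marks) of the diagram. -/
noncomputable def numSteps (n : ℕ) (D : Set (ℕ × ℕ)) : ℕ := (diagSeq n D).length

/-- `ξ_i`, the root marked `⊗` at step `i` (for `1 ≤ i ≤ c`). -/
noncomputable def xiRoot (n : ℕ) (D : Set (ℕ × ℕ)) (i : ℕ) : ℕ × ℕ :=
  (((diagSeq n D).getD (i - 1) ((0, 0), initMark n D))).1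

/-- The state of the diagram after step `i` (for `0 ≤ i ≤ c`); the state
"before step `i`" is `stateAfter n D (i-1)`. -/
noncomputable def stateAfter (n : ℕ) (D : Set (ℕ × ℕ)) : ℕ → MState
  | 0 => initMark n D
  | i + 1 => (((diagSeq n D).getD i ((0, 0), initMark n D))).2

/-- `C(D)`: the set of roots marked `⊗` on the diagram. -/
noncomputable def CD (n : ℕ) (D : Set (ℕ × ℕ)) : Set (ℕ × ℕ) :=
  {γ | γ ∈ (diagSeq n D).map Prod.fst}

/-- `A_γ`: the set of roots of `C(D)` in the same row as `γ`, strictly to the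
left of `γ`. -/
noncomputable def AD (n : ℕ) (D : Set (ℕ × ℕ)) (γ : ℕ × ℕ) : Set (ℕ × ℕ) :=
  {γ' | γ' ∈ CD n D ∧ γ'.1 = γ.1 ∧ γ'.2 < γ.2}
/-- `w_i = r_{ξ_1} ∘ ⋯ ∘ r_{ξ_i}` as a permutation of `ℕ` (each reflection
`r_{(a,b)}` being the transposition of `a` and `b`). -/
noncomputable def wStep (n : ℕ) (D : Set (ℕ × ℕ)) (i : ℕ) : Equiv.Perm ℕ :=
  (List.range i).foldl
    (fun w k => w * Equiv.swap (xiRoot n D (k + 1)).1 (xiRoot n D (k + 1)).2) 1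

/-- `w(γ) > 0`: the image of the root `γ` under `w` is a positive root. -/
def PosUnder (w : Equiv.Perm ℕ) (γ : ℕ × ℕ) : Prop := w γ.2 < w γ.1

/-- The linear order `≻` on positive roots: `(k,m) ≻ (i,j)` iff `m < j`, or
`m = j` and `k > i`.  `SuccG a b` means `a ≻ b`. -/
def SuccG (a b : ℕ × ℕ) : Prop := a.2 < b.2 ∨ (a.2 = b.2 ∧ b.1 < a.1)

/-!
The diagram sweeps the positive roots column by column, each column from the bottom row up. Let
`w` be the product of the reflections found so far. The point is that `w` alone remembers the
marks: a root still ahead of the sweep is unmarked iff it is not in `M(D)` and `w` keeps it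
positive (`TracksMarks`). Indeed, when `ξ = (a, b)` is marked, a decomposition
`ξ = (x, b) + (a, x)` has both summands unmarked iff `w b < w x < w a`, and the summands so
obtained are exactly the unmarked roots ahead that the reflection `r_ξ` makes negative.

This relies on the shape of `w` while column `b` is swept (`SweepInv`). In the rows `x > b`, `w`
fixes those whose root of `D` is still ahead, and takes values `≤ b` on the others; moreover `w b`
exceeds the values on those others that the sweep of column `b` has already passed. At the end of
the column `w b` is therefore the greedy choice defining `w_D b`, and no later reflection moves it.
-/

section Roots

variable {n : ℕ} {D : Set (ℕ × ℕ)}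

theorem IsBasic.isPosRoot (hD : IsBasic n D) {x y : ℕ} (h : (x, y) ∈ D) : 1 ≤ y ∧ y < x ∧ x ≤ n :=
  hD.1 _ h

theorem IsBasic.col_unique (hD : IsBasic n D) {x y y' : ℕ} (h : (x, y) ∈ D) (h' : (x, y') ∈ D) :
    y = y' :=
  congrArg Prod.snd (hD.2.1 _ h _ h' rfl)

theorem IsBasic.row_unique (hD : IsBasic n D) {x x' y : ℕ} (h : (x, y) ∈ D) (h' : (x', y) ∈ D) :
    x = x' :=
  congrArg Prod.fst (hD.2.2 _ h _ h' rfl)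

theorem mem_MD_iff (hD : IsBasic n D) {x y : ℕ} :
    (x, y) ∈ MD n D ↔ IsPosRoot n (x, y) ∧ (∀ k ≥ x, (k, y) ∉ D) ∧ ∀ k ≤ y, (x, k) ∉ D := by
  constructor
  · rintro ⟨hxy, hsing, hnD⟩
    refine ⟨hxy, fun k hk hkD => ?_, fun k hk hkD => ?_⟩
    · rcases hk.eq_or_lt with rfl | hlt
      · exact hnD hkD
      · exact hsing ⟨hxy, (k, x), (k, y),
          ⟨hxy.1.trans hxy.2.1.le, hlt, (hD.isPosRoot hkD).2.2⟩, Or.inr ⟨rfl, rfl⟩, hkD⟩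
    · rcases hk.eq_or_lt with rfl | hlt
      · exact hnD hkD
      · exact hsing ⟨hxy, (y, k), (x, k),
          ⟨(hD.isPosRoot hkD).1, hlt, hxy.2.1.le.trans hxy.2.2⟩, Or.inl ⟨rfl, rfl⟩, hkD⟩
  · rintro ⟨hxy, hcol, hrow⟩
    refine ⟨hxy, ?_, hcol x le_rfl⟩
    rintro ⟨-, ⟨p, q⟩, γ, hβ, ⟨rfl, rfl⟩ | ⟨rfl, rfl⟩, hγ⟩
    · exact hrow q hβ.2.1.le hγ
    · exact hcol p hβ.2.1.le hγ

theorem not_mem_MD_of_row (hD : IsBasic n D) {x y k : ℕ} (hk : k ≤ y) (hxk : (x, k) ∈ D) :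
    (x, y) ∉ MD n D :=
  fun h => ((mem_MD_iff hD).1 h).2.2 k hk hxk

theorem not_mem_MD_of_col (hD : IsBasic n D) {x y k : ℕ} (hk : x ≤ k) (hky : (k, y) ∈ D) :
    (x, y) ∉ MD n D :=
  fun h => ((mem_MD_iff hD).1 h).2.1 k hk hky

theorem SuccG.irrefl (γ : ℕ × ℕ) : ¬ SuccG γ γ := by
  simp only [SuccG]
  omega

theorem SuccG.asymm {γ δ : ℕ × ℕ} (h : SuccG γ δ) : ¬ SuccG δ γ := by
  simp only [SuccG] at *
  omega

theorem SuccG.trans {γ δ ε : ℕ × ℕ} (h : SuccG γ δ) (h' : SuccG δ ε) : SuccG γ ε := by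
  simp only [SuccG] at *
  omega

theorem mem_rootList {γ : ℕ × ℕ} : γ ∈ rootList n ↔ IsPosRoot n γ := by
  obtain ⟨x, y⟩ := γ
  simp only [rootList, List.mem_flatMap, List.mem_range, List.mem_filterMap, IsPosRoot,
    Option.ite_none_right_eq_some, Option.some.injEq, Prod.mk.injEq]
  constructor
  · rintro ⟨j, -, k, -, h⟩
    omega
  · rintro ⟨h1, h2, h3⟩
    exact ⟨y - 1, by omega, n - x, by omega, by omega⟩

theorem pairwise_rootList (n : ℕ) : (rootList n).Pairwise SuccG := by
  simp only [rootList, List.pairwise_flatMap, List.pairwise_filterMap, List.mem_filterMap,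
    Option.ite_none_right_eq_some, Option.some.injEq]
  constructor
  · intro j _
    refine List.pairwise_lt_range.imp fun {k l} hkl => ?_
    rintro _ ⟨_, rfl⟩ _ ⟨_, rfl⟩
    exact Or.inr ⟨rfl, by dsimp only; omega⟩
  · refine List.pairwise_lt_range.imp fun {i j} hij => ?_
    rintro _ ⟨k, -, -, rfl⟩ _ ⟨l, -, -, rfl⟩
    exact Or.inl (Nat.succ_lt_succ hij)

end Roots

section GreedyPermutation

variable {n : ℕ} {D : Set (ℕ × ℕ)}

theorem wDVals_succ (n : ℕ) (D : Set (ℕ × ℕ)) (j : ℕ) :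
    wDVals n D (j + 1) = wDVals n D j ++ [wD n D (j + 1)] := by
  simp [wD, wDVals]

theorem wDVals_eq_map (n : ℕ) (D : Set (ℕ × ℕ)) (j : ℕ) :
    wDVals n D j = (List.range j).map fun y => wD n D (y + 1) := by
  induction j with
  | zero => rfl
  | succ j ih => rw [wDVals_succ, ih, List.range_succ, List.map_append, List.map_singleton]

theorem wD_succ_eq_of_isGreatest {i j : ℕ}
    (h : IsGreatest {i | 1 ≤ i ∧ i ≤ n ∧ (i, j + 1) ∉ MD n D ∧ ∀ y < j, wD n D (y + 1) ≠ i} i) :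
    wD n D (j + 1) = i := by
  have hval : wD n D (j + 1) =
      sSup {i | 1 ≤ i ∧ i ≤ n ∧ (i, j + 1) ∉ MD n D ∧ i ∉ wDVals n D j} := by
    simp [wD, wDVals]
  rw [hval, ← h.csSup_eq]
  simp only [wDVals_eq_map, List.mem_map, List.mem_range, not_exists, not_and, ne_eq]

end GreedyPermutation

section Run

variable {n : ℕ} {D : Set (ℕ × ℕ)} {s : MState}

theorem markStep_col_eq_none_iff {a b x : ℕ} (hbx : b < x) (hxa : x < a) :
    markStep s (a, b) (x, b) = none ↔ s (x, b) = none ∧ s (a, x) ≠ none := by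
  simp only [markStep, Prod.mk.injEq]
  grind

theorem markStep_row_eq_none_iff {a b y : ℕ} (hby : b < y) (hya : y < a) :
    markStep s (a, b) (a, y) = none ↔ s (a, y) = none ∧ s (y, b) ≠ none := by
  simp only [markStep, Prod.mk.injEq]
  grind

theorem markStep_of_ne {a b x y : ℕ} (hx : x ≠ a) (hy : y ≠ b) :
    markStep s (a, b) (x, y) = s (x, y) := by
  simp [markStep, hx, hy]

theorem eq_none_of_markStep {ξ γ : ℕ × ℕ} (h : markStep s ξ γ = none) : s γ = none := by
  simp only [markStep] at h
  split_ifs at h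
  exact h

theorem diagRun_eq_nil {L : List (ℕ × ℕ)} (h : diagRun s L = []) : ∀ γ ∈ L, s γ ≠ none := by
  induction L with
  | nil => simp
  | cons ξ L ih =>
    rw [diagRun] at h
    split_ifs at h with hξ
    exact List.forall_mem_cons.2 ⟨hξ, ih h⟩

theorem diagRun_eq_cons {L : List (ℕ × ℕ)} {ξ : ℕ × ℕ} {t : MState} {l : List ((ℕ × ℕ) × MState)}
    (h : diagRun s L = (ξ, t) :: l) :
    ∃ pre post, L = pre ++ ξ :: post ∧ (∀ γ ∈ pre, s γ ≠ none) ∧ s ξ = none ∧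
      t = markStep s ξ ∧ diagRun t post = l := by
  induction L with
  | nil => simp [diagRun] at h
  | cons ζ L ih =>
    rw [diagRun] at h
    split_ifs at h with hζ
    · obtain ⟨⟨rfl, rfl⟩, rfl⟩ : (ζ = ξ ∧ markStep s ζ = t) ∧ diagRun (markStep s ζ) L = l := by
        simpa using h
      exact ⟨[], L, rfl, by simp, hζ, rfl, rfl⟩
    · obtain ⟨pre, post, rfl, hpre, hrest⟩ := ih h
      exact ⟨ζ :: pre, post, rfl, List.forall_mem_cons.2 ⟨hζ, hpre⟩, hrest⟩

theorem wStep_succ (n : ℕ) (D : Set (ℕ × ℕ)) (k : ℕ) :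
    wStep n D (k + 1) =
      wStep n D k * Equiv.swap (xiRoot n D (k + 1)).1 (xiRoot n D (k + 1)).2 := by
  simp only [wStep, List.range_succ, List.foldl_append, List.foldl_cons, List.foldl_nil]

theorem drop_diagSeq {k : ℕ} (hk : k < numSteps n D) :
    (diagSeq n D).drop k =
      (xiRoot n D (k + 1), stateAfter n D (k + 1)) :: (diagSeq n D).drop (k + 1) := by
  have hlt : k < (diagSeq n D).length := hk
  rw [List.drop_eq_getElem_cons hlt]
  simp only [xiRoot, stateAfter, Nat.add_sub_cancel, List.getD_eq_getElem _ _ hlt, Prod.mk.eta]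

/-- The position of the sweep after `k` steps: `ξ_k`, or for `k = 0` a sentinel `(n + 1, 1)` that
is `≻` every positive root. The roots still ahead of the sweep are those `γ` with
`SuccG (sweepPos n D k) γ`. -/
noncomputable def sweepPos (n : ℕ) (D : Set (ℕ × ℕ)) : ℕ → ℕ × ℕ
  | 0 => (n + 1, 1)
  | k + 1 => xiRoot n D (k + 1)

theorem IsPosRoot.sweepPos_zero_succG {γ : ℕ × ℕ} (hγ : IsPosRoot n γ) :
    SuccG (sweepPos n D 0) γ := by
  simp only [IsPosRoot, SuccG, sweepPos] at *
  omega

theorem sweepPos_of_pos {k : ℕ} (hk : 1 ≤ k) : sweepPos n D k = xiRoot n D k := by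
  obtain ⟨k, rfl⟩ := Nat.exists_eq_add_of_le' hk
  rfl

theorem exists_list_ahead {k : ℕ} (hk : k ≤ numSteps n D) :
    ∃ L : List (ℕ × ℕ), L.Pairwise SuccG ∧
      (∀ γ, γ ∈ L ↔ IsPosRoot n γ ∧ SuccG (sweepPos n D k) γ) ∧
      diagRun (stateAfter n D k) L = (diagSeq n D).drop k := by
  induction k with
  | zero =>
    exact ⟨rootList n, pairwise_rootList n, fun γ => mem_rootList.trans
      (iff_self_and.2 IsPosRoot.sweepPos_zero_succG), rfl⟩
  | succ k ih =>
    obtain ⟨L, hsorted, hmem, hrun⟩ := ih (Nat.le_of_succ_le hk)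
    rw [drop_diagSeq hk] at hrun
    obtain ⟨pre, post, rfl, -, -, -, hpost⟩ := diagRun_eq_cons hrun
    obtain ⟨-, hξpost, hcross⟩ := List.pairwise_append.1 hsorted
    obtain ⟨hξ, hpost_sorted⟩ := List.pairwise_cons.1 hξpost
    refine ⟨post, hpost_sorted, fun γ => ⟨fun hγ => ⟨((hmem γ).1 (by simp [hγ])).1, hξ γ hγ⟩, ?_⟩,
      hpost⟩
    rintro ⟨hγ, hξγ⟩
    have hpos := ((hmem (xiRoot n D (k + 1))).1 (by simp)).2
    have hγL := (hmem γ).2 ⟨hγ, hpos.trans hξγ⟩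
    rcases List.mem_append.1 hγL with hpre | hcons
    · exact absurd hξγ (hcross γ hpre _ List.mem_cons_self).asymm
    · refine (List.mem_cons.1 hcons).resolve_left ?_
      rintro rfl
      exact SuccG.irrefl _ hξγ

theorem xiRoot_succ_spec {k : ℕ} (hk : k < numSteps n D) :
    IsPosRoot n (xiRoot n D (k + 1)) ∧ SuccG (sweepPos n D k) (xiRoot n D (k + 1)) ∧
      stateAfter n D k (xiRoot n D (k + 1)) = none := by
  obtain ⟨L, -, hmem, hrun⟩ := exists_list_ahead hk.le
  rw [drop_diagSeq hk] at hrun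
  obtain ⟨pre, post, rfl, -, hnone, -⟩ := diagRun_eq_cons hrun
  obtain ⟨hξ, hpos⟩ := (hmem (xiRoot n D (k + 1))).1 (by simp)
  exact ⟨hξ, hpos, hnone⟩

theorem eq_or_xiRoot_succ_succG {k : ℕ} (hk : k < numSteps n D) {γ : ℕ × ℕ} (hγ : IsPosRoot n γ)
    (hpos : SuccG (sweepPos n D k) γ) (hnone : stateAfter n D k γ = none) :
    γ = xiRoot n D (k + 1) ∨ SuccG (xiRoot n D (k + 1)) γ := by
  obtain ⟨L, hsorted, hmem, hrun⟩ := exists_list_ahead hk.le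
  rw [drop_diagSeq hk] at hrun
  obtain ⟨pre, post, rfl, hpre, -⟩ := diagRun_eq_cons hrun
  rcases List.mem_append.1 ((hmem γ).2 ⟨hγ, hpos⟩) with h | h
  · exact absurd hnone (hpre γ h)
  · exact (List.mem_cons.1 h).imp_right
      ((List.pairwise_cons.1 (List.pairwise_append.1 hsorted).2.1).1 γ)

theorem stateAfter_succ {k : ℕ} (hk : k < numSteps n D) :
    stateAfter n D (k + 1) = markStep (stateAfter n D k) (xiRoot n D (k + 1)) := by
  obtain ⟨L, -, -, hrun⟩ := exists_list_ahead hk.le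
  rw [drop_diagSeq hk] at hrun
  obtain ⟨-, -, -, -, -, hstate, -⟩ := diagRun_eq_cons hrun
  exact hstate

theorem stateAfter_numSteps_ne_none {γ : ℕ × ℕ} (hγ : IsPosRoot n γ)
    (hpos : SuccG (sweepPos n D (numSteps n D)) γ) : stateAfter n D (numSteps n D) γ ≠ none := by
  obtain ⟨L, -, hmem, hrun⟩ := exists_list_ahead (le_refl (numSteps n D))
  rw [numSteps, List.drop_length] at hrun
  exact diagRun_eq_nil hrun γ ((hmem γ).2 ⟨hγ, hpos⟩)

theorem ahead_unmarked_of_le {i k : ℕ} (hik : i ≤ k) (hk : k ≤ numSteps n D) {γ : ℕ × ℕ}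
    (h : SuccG (sweepPos n D k) γ ∧ stateAfter n D k γ = none) :
    SuccG (sweepPos n D i) γ ∧ stateAfter n D i γ = none := by
  induction k, hik using Nat.le_induction with
  | base => exact h
  | succ k _ ih =>
    refine ih (Nat.le_of_succ_le hk) ⟨(xiRoot_succ_spec hk).2.1.trans h.1, ?_⟩
    exact eq_none_of_markStep (stateAfter_succ hk ▸ h.2)

end Run

section Sweep

variable {n a b x y : ℕ} {D : Set (ℕ × ℕ)} {s : MState} {w : Equiv.Perm ℕ}

/-- A root `γ` is admissible for the reflection product `w` if `γ ∉ M(D)` and `w(γ) > 0`. The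
next root to be marked `⊗` turns out to be the `≻`-greatest admissible root ahead of the sweep. -/
def Admissible (n : ℕ) (D : Set (ℕ × ℕ)) (w : Equiv.Perm ℕ) (γ : ℕ × ℕ) : Prop :=
  γ ∉ MD n D ∧ PosUnder w γ

/-- On the roots ahead of position `p` of the sweep, the marking `s` is determined by the
reflection product `w`. -/
def TracksMarks (n : ℕ) (D : Set (ℕ × ℕ)) (p : ℕ × ℕ) (s : MState) (w : Equiv.Perm ℕ) : Prop :=
  ∀ γ, IsPosRoot n γ → SuccG p γ → (s γ = none ↔ Admissible n D w γ)

/-- The sweep at position `(a, b)` has passed the root of `D` in row `x`: that root lies in a column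
`< b`, or in column `b` and a row `≥ a`. -/
def Reached (D : Set (ℕ × ℕ)) (a b x : ℕ) : Prop :=
  ∃ y, (x, y) ∈ D ∧ (y < b ∨ y = b ∧ a ≤ x)

theorem Reached.not_mem_MD (hD : IsBasic n D) (h : Reached D a b x) (hy : b ≤ y) :
    (x, y) ∉ MD n D := by
  obtain ⟨k, hkD, hk⟩ := h
  exact not_mem_MD_of_row hD (by omega) hkD

theorem reached_of_mem (hx : a ≤ x) (hxb : (x, b) ∈ D) : Reached D a b x :=
  ⟨b, hxb, Or.inr ⟨rfl, hx⟩⟩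

theorem not_reached_of_mem (hD : IsBasic n D) (hx : x < a) (hxy : (x, y) ∈ D) (hy : b ≤ y) :
    ¬ Reached D a b x := by
  rintro ⟨k, hkD, hk⟩
  have := hD.col_unique hkD hxy
  omega

theorem reached_iff_reached_succ_or :
    Reached D a b x ↔ Reached D (a + 1) b x ∨ x = a ∧ (a, b) ∈ D := by
  constructor
  · rintro ⟨k, hkD, hk | ⟨rfl, hx⟩⟩
    · exact Or.inl ⟨k, hkD, Or.inl hk⟩
    · rcases hx.eq_or_lt with rfl | hlt
      · exact Or.inr ⟨rfl, hkD⟩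
      · exact Or.inl (reached_of_mem hlt hkD)
  · rintro (⟨k, hkD, hk⟩ | ⟨rfl, hxD⟩)
    · exact ⟨k, hkD, by omega⟩
    · exact reached_of_mem le_rfl hxD

theorem reached_iff_reached_succ_of_ne (hx : x ≠ a) :
    Reached D a b x ↔ Reached D (a + 1) b x :=
  reached_iff_reached_succ_or.trans (or_iff_left fun h => hx h.1)

theorem reached_next_column_iff (hx : b < x) (hxn : x ≤ n) :
    Reached D (n + 1) (b + 1) x ↔ Reached D (b + 1) b x :=
  exists_congr fun _ => and_congr_right fun _ => by omega

/-- The shape of the reflection product `w` at position `(a, b)` of the sweep, that is, when the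
roots of columns `< b` and those of column `b` in rows `≥ a` have been processed. Column `b` starts
at `a = n + 1` and ends at `a = b + 1`. -/
structure SweepInv (n : ℕ) (D : Set (ℕ × ℕ)) (a b : ℕ) (w : Equiv.Perm ℕ) : Prop where
  one_le_col : 1 ≤ b
  col_lt_row : b < a
  row_le : a ≤ n + 1
  mem_Icc_iff : ∀ x, w x ∈ Set.Icc 1 n ↔ x ∈ Set.Icc 1 n
  apply_eq_self : ∀ x > b, ¬ Reached D a b x → w x = x
  apply_le : ∀ x > b, Reached D a b x → w x ≤ b
  apply_lt : ∀ x ≥ a, Reached D a b x → w x < w b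
  apply_col_eq : ∀ x ≥ a, (x, b) ∈ D → w b = x
  apply_col_le : (∀ x ≥ a, (x, b) ∉ D) → w b ≤ b
  apply_eq_wD : ∀ y ≥ 1, y < b → w y = wD n D y

theorem TracksMarks.start (n : ℕ) (D : Set (ℕ × ℕ)) (p : ℕ × ℕ) :
    TracksMarks n D p (initMark n D) 1 := by
  intro γ hγ _
  simp [initMark, Admissible, PosUnder, hγ.2.1]

theorem TracksMarks.advance {p q : ℕ × ℕ} (h : TracksMarks n D p s w)
    (hpq : ∀ γ, IsPosRoot n γ → SuccG q γ → SuccG p γ) : TracksMarks n D q s w :=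
  fun γ hγ hqγ => h γ hγ (hpq γ hγ hqγ)

namespace SweepInv

theorem start (hn : 1 ≤ n) (hD : IsBasic n D) : SweepInv n D (n + 1) 1 1 where
  one_le_col := le_rfl
  col_lt_row := Nat.lt_succ_of_le hn
  row_le := le_rfl
  mem_Icc_iff _ := Iff.rfl
  apply_eq_self _ _ _ := rfl
  apply_le x _ := by
    rintro ⟨y, hxy, hy⟩
    have := hD.isPosRoot hxy
    omega
  apply_lt x hx := fun ⟨y, hxy, _⟩ => absurd (hD.isPosRoot hxy).2.2 (by omega)
  apply_col_eq x hx hxD := absurd (hD.isPosRoot hxD).2.2 (by omega)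
  apply_col_le _ := le_rfl
  apply_eq_wD y h1 h2 := by omega

theorem apply_le_self (h : SweepInv n D a b w) (hx : b < x) : w x ≤ x := by
  by_cases hr : Reached D a b x
  · exact (h.apply_le x hx hr).trans hx.le
  · exact (h.apply_eq_self x hx hr).le

theorem apply_col_le_of_mem (hD : IsBasic n D) (h : SweepInv n D a b w) (hx : x < a)
    (hxb : (x, b) ∈ D) : w b ≤ b := by
  refine h.apply_col_le fun z hz hzD => ?_
  have := hD.row_unique hzD hxb
  omega

theorem mem_col_choices (hD : IsBasic n D) (h : SweepInv n D (b + 1) b w) :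
    1 ≤ w b ∧ w b ≤ n ∧ (w b, b) ∉ MD n D ∧ ∀ y ≥ 1, y < b → wD n D y ≠ w b := by
  obtain ⟨h1, hn⟩ := (h.mem_Icc_iff b).2 ⟨h.one_le_col, Nat.le_of_succ_le_succ h.row_le⟩
  refine ⟨h1, hn, fun hM => ?_, fun y hy hyb heq => ?_⟩
  · have hlt : b < w b := hM.1.2.1
    have hD' : ∃ x ≥ b + 1, (x, b) ∈ D := by
      by_contra! hno
      exact (h.apply_col_le hno).not_gt hlt
    obtain ⟨x, hx, hxD⟩ := hD'
    exact not_mem_MD_of_col hD (h.apply_col_eq x hx hxD).le hxD hM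
  · rw [← h.apply_eq_wD y hy hyb] at heq
    exact hyb.ne (w.injective heq)

theorem apply_le_col_of_not_mem_MD (hD : IsBasic n D) (h : SweepInv n D (b + 1) b w)
    (hx : b < x) (hxn : x ≤ n) (hM : (w x, b) ∉ MD n D) : w x ≤ w b := by
  by_cases hr : Reached D (b + 1) b x
  · exact (h.apply_lt x hx hr).le
  · rw [h.apply_eq_self x hx hr, mem_MD_iff hD] at hM
    rw [h.apply_eq_self x hx hr]
    have hrow : ∀ k ≤ b, (x, k) ∉ D := fun k hk hkD => hr ⟨k, hkD, by omega⟩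
    obtain ⟨k, hk, hkD⟩ : ∃ k ≥ x, (k, b) ∈ D := by
      by_contra! hcol
      exact hM ⟨⟨h.one_le_col, hx, hxn⟩, hcol, hrow⟩
    rw [h.apply_col_eq k (by omega) hkD]
    exact hk

theorem apply_col_eq_wD (hD : IsBasic n D) (h : SweepInv n D (b + 1) b w) : w b = wD n D b := by
  obtain ⟨c, rfl⟩ := Nat.exists_eq_add_of_le' h.one_le_col
  obtain ⟨h1, hn, hM, hnew⟩ := h.mem_col_choices hD
  have hmem : ∀ y < c, wD n D (y + 1) ≠ w (c + 1) := fun y hy =>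
    hnew _ y.succ_pos (Nat.succ_lt_succ hy)
  refine (wD_succ_eq_of_isGreatest ⟨⟨h1, hn, hM, hmem⟩, ?_⟩).symm
  rintro i ⟨hi1, hin, hiM, hinew⟩
  obtain ⟨x, rfl⟩ := w.surjective i
  obtain ⟨hx1, hxn⟩ := (h.mem_Icc_iff x).1 ⟨hi1, hin⟩
  rcases lt_trichotomy x (c + 1) with hlt | rfl | hgt
  · obtain ⟨y, rfl⟩ := Nat.exists_eq_add_of_le' hx1
    exact absurd (h.apply_eq_wD _ hx1 hlt).symm (hinew y (by omega))
  · exact le_rfl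
  · exact h.apply_le_col_of_not_mem_MD hD hgt hxn hiM

theorem next_column (hD : IsBasic n D) (h : SweepInv n D (b + 1) b w) (hb : b < n) :
    SweepInv n D (n + 1) (b + 1) w where
  one_le_col := Nat.succ_pos b
  col_lt_row := Nat.succ_lt_succ hb
  row_le := le_rfl
  mem_Icc_iff := h.mem_Icc_iff
  apply_eq_self x hx hr := h.apply_eq_self x (by omega) fun ⟨y, hxy, hy⟩ =>
    hr ⟨y, hxy, by omega⟩
  apply_le x hx hr := by
    obtain ⟨y, hxy, -⟩ := id hr
    rw [reached_next_column_iff (by omega) (hD.isPosRoot hxy).2.2] at hr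
    exact (h.apply_le x (by omega) hr).trans b.le_succ
  apply_lt x hx := fun ⟨y, hxy, _⟩ => absurd (hD.isPosRoot hxy).2.2 (by omega)
  apply_col_eq x hx hxD := absurd (hD.isPosRoot hxD).2.2 (by omega)
  apply_col_le _ := h.apply_le_self b.lt_succ_self
  apply_eq_wD y h1 h2 := by
    rcases Nat.lt_succ_iff_lt_or_eq.1 h2 with hlt | rfl
    · exact h.apply_eq_wD y h1 hlt
    · exact h.apply_col_eq_wD hD

theorem admissible_of_mem (hD : IsBasic n D) (h : SweepInv n D (a + 1) b w) (hab : (a, b) ∈ D) :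
    Admissible n D w (a, b) := by
  obtain ⟨-, hlt, -⟩ := hD.isPosRoot hab
  refine ⟨not_mem_MD_of_row hD le_rfl hab, ?_⟩
  rw [PosUnder, h.apply_eq_self a hlt (not_reached_of_mem hD a.lt_succ_self hab le_rfl)]
  exact (h.apply_col_le_of_mem hD a.lt_succ_self hab).trans_lt hlt

theorem skip (hD : IsBasic n D) (h : SweepInv n D (a + 1) b w) (hlt : b < a)
    (hadm : ¬ Admissible n D w (a, b)) : SweepInv n D a b w := by
  have hnD : (a, b) ∉ D := fun hab => hadm (h.admissible_of_mem hD hab)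
  have hreach : ∀ x, Reached D a b x ↔ Reached D (a + 1) b x := fun x =>
    reached_iff_reached_succ_or.trans (or_iff_left fun h => hnD h.2)
  have hrow : ∀ x ≥ a, (x, b) ∈ D → x ≥ a + 1 := fun x hx hxD =>
    lt_of_le_of_ne hx fun heq => hnD (heq ▸ hxD)
  exact {
    one_le_col := h.one_le_col
    col_lt_row := hlt
    row_le := Nat.le_of_succ_le h.row_le
    mem_Icc_iff := h.mem_Icc_iff
    apply_eq_self := fun x hx hr => h.apply_eq_self x hx (mt (hreach x).2 hr)
    apply_le := fun x hx hr => h.apply_le x hx ((hreach x).1 hr)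
    apply_lt := fun x hx hr => by
      rcases hx.eq_or_lt with rfl | hgt
      · have hle : w a ≤ w b := not_lt.1 fun hw => hadm ⟨hr.not_mem_MD hD le_rfl, hw⟩
        exact lt_of_le_of_ne hle (w.injective.ne hlt.ne')
      · exact h.apply_lt x hgt ((hreach x).1 hr)
    apply_col_eq := fun x hx hxD => h.apply_col_eq x (hrow x hx hxD) hxD
    apply_col_le := fun hx => h.apply_col_le fun x hax => hx x (Nat.le_of_succ_le hax)
    apply_eq_wD := h.apply_eq_wD }

theorem reached_of_admissible (hD : IsBasic n D) (h : SweepInv n D (a + 1) b w) (hlt : b < a)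
    (hadm : Admissible n D w (a, b)) : Reached D a b a := by
  obtain ⟨hM, hw⟩ := hadm
  by_contra hr
  have hr' : ¬ Reached D (a + 1) b a := mt (fun h => reached_iff_reached_succ_or.2 (Or.inl h)) hr
  rw [PosUnder, h.apply_eq_self a hlt hr'] at hw
  refine hM ((mem_MD_iff hD).2 ⟨⟨h.one_le_col, hlt, Nat.le_of_succ_le_succ h.row_le⟩,
    fun k hk hkD => ?_, fun k hk hkD => hr ⟨k, hkD, by omega⟩⟩)
  rcases hk.eq_or_lt with rfl | hk
  · exact hr (reached_of_mem le_rfl hkD)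
  · exact (h.apply_col_eq k hk hkD ▸ hw).not_gt hk

theorem apply_lt_of_mem_MD (hD : IsBasic n D) (h : SweepInv n D (a + 1) b w)
    (hadm : Admissible n D w (a, b)) (hxa : x < a) (hM : (x, b) ∈ MD n D) : w a < w x := by
  obtain ⟨hx, hcol, hrow⟩ := (mem_MD_iff hD).1 hM
  have hlt : b < a := hx.2.1.trans hxa
  have hfix : w x = x :=
    h.apply_eq_self x hx.2.1 fun ⟨k, hkD, hk⟩ => hrow k (by omega) hkD
  have hreach : Reached D (a + 1) b a :=
    (reached_iff_reached_succ_or.1 (h.reached_of_admissible hD hlt hadm)).resolve_right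
      fun hab => hcol a hxa.le hab.2
  rw [hfix]
  exact (h.apply_le a hlt hreach).trans_lt hx.2.1

theorem apply_lt_iff_of_lt (h : SweepInv n D (a + 1) b w) (hlt : b < a) (hw : w b < w a)
    (hax : a < x) : w a < w x ↔ w b < w x := by
  refine ⟨hw.trans, fun hbx => ?_⟩
  by_cases hr : Reached D (a + 1) b x
  · exact absurd hbx (h.apply_lt x hax hr).not_gt
  · rw [h.apply_eq_self x (hlt.trans hax) hr]
    exact (h.apply_le_self hlt).trans_lt hax

theorem admissible_swap_row (hD : IsBasic n D) (h : SweepInv n D (a + 1) b w)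
    (hadm : Admissible n D w (a, b)) (hby : b < y) (hya : y < a) :
    Admissible n D (w * Equiv.swap a b) (a, y) ↔
      Admissible n D w (a, y) ∧ ¬ Admissible n D w (y, b) := by
  have hlt := hby.trans hya
  have hM : (a, y) ∉ MD n D := (h.reached_of_admissible hD hlt hadm).not_mem_MD hD hby.le
  have hMD := h.apply_lt_of_mem_MD hD hadm hya
  have hw : w b < w a := hadm.2
  have hne : w y ≠ w b := w.injective.ne hby.ne'
  simp only [Admissible, PosUnder, Equiv.Perm.mul_apply, Equiv.swap_apply_left,
    Equiv.swap_apply_of_ne_of_ne hya.ne hby.ne', hM, not_false_eq_true, true_and, not_and]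
  by_cases hyM : (y, b) ∈ MD n D
  · have := hMD hyM
    simp only [hyM, not_true_eq_false, false_implies, and_true]
    omega
  · simp only [hyM, not_false_eq_true, true_implies]
    omega

theorem admissible_swap_col (hD : IsBasic n D) (h : SweepInv n D (a + 1) b w)
    (hadm : Admissible n D w (a, b)) (hbx : b < x) (hxa : x < a) :
    Admissible n D (w * Equiv.swap a b) (x, b) ↔
      Admissible n D w (x, b) ∧ ¬ Admissible n D w (a, x) := by
  have hM : (a, x) ∉ MD n D :=
    (h.reached_of_admissible hD (hbx.trans hxa) hadm).not_mem_MD hD hbx.le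
  have hw : w b < w a := hadm.2
  have hne : w x ≠ w a := w.injective.ne hxa.ne
  simp only [Admissible, PosUnder, Equiv.Perm.mul_apply, Equiv.swap_apply_right,
    Equiv.swap_apply_of_ne_of_ne hxa.ne hbx.ne', hM, not_false_eq_true, true_and, and_assoc]
  refine and_congr_right fun _ => ?_
  omega

theorem admissible_swap_of_ne (h : SweepInv n D (a + 1) b w) (hadm : Admissible n D w (a, b))
    (hba : b < a) (hby : b < y) (hyx : y < x) (hxa : x ≠ a) :
    Admissible n D (w * Equiv.swap a b) (x, y) ↔ Admissible n D w (x, y) := by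
  simp only [Admissible, PosUnder, Equiv.Perm.mul_apply,
    Equiv.swap_apply_of_ne_of_ne hxa (hby.trans hyx).ne']
  refine and_congr_right fun _ => ?_
  rcases eq_or_ne y a with rfl | hya
  · rw [Equiv.swap_apply_left, h.apply_lt_iff_of_lt hba hadm.2 hyx]
  · rw [Equiv.swap_apply_of_ne_of_ne hya hby.ne']

theorem tracksMarks_markStep (hD : IsBasic n D) (h : SweepInv n D (a + 1) b w) (hba : b < a)
    (ht : TracksMarks n D (a + 1, b) s w) (hadm : Admissible n D w (a, b)) :
    TracksMarks n D (a, b) (markStep s (a, b)) (w * Equiv.swap a b) := by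
  have han : a ≤ n := Nat.le_of_succ_le_succ h.row_le
  have hcol : ∀ x, b < x → x < a → (s (x, b) = none ↔ Admissible n D w (x, b)) := fun x hbx hxa =>
    ht _ ⟨h.one_le_col, hbx, hxa.le.trans han⟩ (Or.inr ⟨rfl, Nat.lt_succ_of_lt hxa⟩)
  have hright : ∀ x y, b < y → y < x → x ≤ n → (s (x, y) = none ↔ Admissible n D w (x, y)) :=
    fun x y hby hyx hxn => ht _ ⟨Nat.one_le_of_lt hby, hyx, hxn⟩ (Or.inl hby)
  rintro ⟨x, y⟩ ⟨-, hyx, hxn⟩ hahead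
  dsimp only at hyx hxn
  obtain hby | ⟨rfl, hxa⟩ : b < y ∨ b = y ∧ x < a := hahead
  · rcases eq_or_ne x a with rfl | hxa
    · rw [markStep_row_eq_none_iff hby hyx, h.admissible_swap_row hD hadm hby hyx, ne_eq,
        hright x y hby hyx hxn, hcol y hby hyx]
    · rw [markStep_of_ne hxa hby.ne', h.admissible_swap_of_ne hadm hba hby hyx hxa,
        hright x y hby hyx hxn]
  · rw [markStep_col_eq_none_iff hyx hxa, h.admissible_swap_col hD hadm hyx hxa, ne_eq,
      hcol x hyx hxa, hright a x hyx hxa han]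

theorem apply_col_le_of_admissible (h : SweepInv n D (a + 1) b w) (hba : b < a)
    (hadm : Admissible n D w (a, b)) : w b ≤ b := by
  refine h.apply_col_le fun x hx hxD => ?_
  have hw : w b < w a := hadm.2
  have hxa : w a ≤ a := h.apply_le_self hba
  rw [h.apply_col_eq x hx hxD] at hw
  omega

theorem mark (hD : IsBasic n D) (h : SweepInv n D (a + 1) b w) (hba : b < a)
    (hadm : Admissible n D w (a, b)) : SweepInv n D a b (w * Equiv.swap a b) := by
  have hw : w b < w a := hadm.2
  have hb := h.one_le_col
  have han := h.row_le
  have hreach := h.reached_of_admissible hD hba hadm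
  have hcol := h.apply_col_le_of_admissible hba hadm
  have hne : ∀ x, x ≠ a → x ≠ b → (w * Equiv.swap a b) x = w x := fun x hxa hxb => by
    rw [Equiv.Perm.mul_apply, Equiv.swap_apply_of_ne_of_ne hxa hxb]
  have hatA : (w * Equiv.swap a b) a = w b := by simp
  have hatB : (w * Equiv.swap a b) b = w a := by simp
  refine ⟨hb, hba, by omega, fun x => ?_, fun x hx hr => ?_, fun x hx hr => ?_,
    fun x hx hr => ?_, fun x hx hxD => ?_, fun hno => ?_, fun y hy1 hyb => ?_⟩
  · rw [Equiv.Perm.mul_apply, h.mem_Icc_iff, Equiv.swap_apply_def]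
    split_ifs <;> simp only [Set.mem_Icc] <;> omega
  · have hxa : x ≠ a := fun heq => hr (heq ▸ hreach)
    rw [hne x hxa hx.ne', h.apply_eq_self x hx (mt (reached_iff_reached_succ_of_ne hxa).2 hr)]
  · rcases eq_or_ne x a with rfl | hxa
    · rwa [hatA]
    · exact hne x hxa hx.ne' ▸ h.apply_le x hx ((reached_iff_reached_succ_of_ne hxa).1 hr)
  · rcases eq_or_ne x a with rfl | hxa
    · rwa [hatA, hatB]
    · rw [hne x hxa (hba.trans_le hx).ne', hatB]
      exact (h.apply_lt x (by omega) ((reached_iff_reached_succ_of_ne hxa).1 hr)).trans hw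
  · rw [hatB]
    rcases hx.eq_or_lt with rfl | hax
    · exact h.apply_eq_self a hba (not_reached_of_mem hD a.lt_succ_self hxD le_rfl)
    · have hxb : w b = x := h.apply_col_eq x hax hxD
      omega
  · rw [hatB]
    have hr : Reached D (a + 1) b a := (reached_iff_reached_succ_or.1 hreach).resolve_right
      fun hab => hno a le_rfl hab.2
    exact h.apply_le a hba hr
  · rw [hne y (by omega) hyb.ne]
    exact h.apply_eq_wD y hy1 hyb

theorem skip_rows (hD : IsBasic n D) {a' : ℕ} (h : SweepInv n D a b w) (ha : a' ≤ a) (hb : b < a')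
    (hadm : ∀ x, a' ≤ x → x < a → ¬ Admissible n D w (x, b)) : SweepInv n D a' b w := by
  induction a, ha using Nat.le_induction with
  | base => exact h
  | succ a ha ih =>
    exact ih (h.skip hD (hb.trans_le ha) (hadm a ha a.lt_succ_self)) fun x hx hxa =>
      hadm x hx (Nat.lt_succ_of_lt hxa)

theorem finish_column (hD : IsBasic n D) (h : SweepInv n D a b w) (hb : b < n)
    (hadm : ∀ x, b < x → x < a → ¬ Admissible n D w (x, b)) : SweepInv n D (n + 1) (b + 1) w :=
  (h.skip_rows hD h.col_lt_row b.lt_succ_self hadm).next_column hD hb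

theorem skip_columns (hD : IsBasic n D) {b' : ℕ} (h : SweepInv n D a b w) (hb : b < b')
    (hbn : b' ≤ n)
    (hadm : ∀ x y, IsPosRoot n (x, y) → SuccG (a, b) (x, y) → y < b' → ¬ Admissible n D w (x, y)) :
    SweepInv n D (n + 1) b' w := by
  have ha := h.row_le
  induction b', (show b + 1 ≤ b' from hb) using Nat.le_induction with
  | base =>
    exact h.finish_column hD hbn fun x hbx hxa =>
      hadm x b ⟨h.one_le_col, hbx, by omega⟩ (Or.inr ⟨rfl, hxa⟩) b.lt_succ_self
  | succ c hc ih =>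
    have hprev := ih hc (by omega) fun x y hxy hpos hyc => hadm x y hxy hpos (by omega)
    exact hprev.finish_column hD hbn fun x hcx hxn =>
      hadm x c ⟨hprev.one_le_col, hcx, Nat.le_of_lt_succ hxn⟩ (Or.inl hc) c.lt_succ_self

theorem advance (hD : IsBasic n D) {a' b' : ℕ} (h : SweepInv n D a b w)
    (hle : b < b' ∨ b = b' ∧ a' ≤ a) (hb : b' < a') (hbn : b' ≤ n) (ha : a' ≤ n + 1)
    (hadm : ∀ γ, IsPosRoot n γ → SuccG (a, b) γ → ¬ SuccG (a', b') γ → ¬ Admissible n D w γ) :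
    SweepInv n D a' b' w := by
  have hrow := h.row_le
  rcases hle with hlt | ⟨rfl, ha'⟩
  · have hstart : SweepInv n D (n + 1) b' w := h.skip_columns hD hlt hbn fun x y hxy hpos hyb =>
      hadm (x, y) hxy hpos (by simp only [SuccG]; omega)
    exact hstart.skip_rows hD ha hb fun x hx hxn =>
      hadm (x, b') ⟨hstart.one_le_col, hb.trans_le hx, by omega⟩ (Or.inl hlt)
        (by simp only [SuccG]; omega)
  · exact h.skip_rows hD ha' hb fun x hx hxa =>
      hadm (x, b) ⟨h.one_le_col, hb.trans_le hx, by omega⟩ (Or.inr ⟨rfl, hxa⟩)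
        (by simp only [SuccG]; omega)

end SweepInv

theorem sweepInv_and_tracksMarks (hn : 1 ≤ n) (hD : IsBasic n D) {k : ℕ}
    (hk : k ≤ numSteps n D) :
    SweepInv n D (sweepPos n D k).1 (sweepPos n D k).2 (wStep n D k) ∧
      TracksMarks n D (sweepPos n D k) (stateAfter n D k) (wStep n D k) := by
  induction k with
  | zero => exact ⟨SweepInv.start hn hD, TracksMarks.start n D _⟩
  | succ k ih =>
    obtain ⟨hinv, htracks⟩ := ih (Nat.le_of_succ_le hk)
    obtain ⟨hξ, hpos, hnone⟩ := xiRoot_succ_spec hk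
    have hgreatest := fun γ => eq_or_xiRoot_succ_succG hk (γ := γ)
    rw [wStep_succ, stateAfter_succ hk]
    change SweepInv n D (xiRoot n D (k + 1)).1 (xiRoot n D (k + 1)).2 _ ∧
      TracksMarks n D (xiRoot n D (k + 1)) _ _
    generalize xiRoot n D (k + 1) = ξ at *
    obtain ⟨a, b⟩ := ξ
    obtain ⟨-, hba : b < a, han : a ≤ n⟩ := id hξ
    have hadm : Admissible n D (wStep n D k) (a, b) := (htracks _ hξ hpos).1 hnone
    have hbefore : SweepInv n D (a + 1) b (wStep n D k) := by
      refine hinv.advance hD hpos (by omega) (by omega) (by omega) fun γ hγ hkγ hγξ hγadm => ?_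
      rcases hgreatest γ hγ hkγ ((htracks γ hγ hkγ).2 hγadm) with rfl | hξγ
      · exact hγξ (Or.inr ⟨rfl, a.lt_succ_self⟩)
      · exact hγξ (by simp only [SuccG] at *; omega)
    have htracks' : TracksMarks n D (a + 1, b) (stateAfter n D k) (wStep n D k) :=
      htracks.advance fun γ _ hγ => by simp only [SuccG] at *; omega
    exact ⟨hbefore.mark hD hba hadm, hbefore.tracksMarks_markStep hD hba htracks' hadm⟩

theorem stateAfter_eq_none_iff (hn : 1 ≤ n) (hD : IsBasic n D) {k : ℕ} (hk : k ≤ numSteps n D)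
    {γ : ℕ × ℕ} (hγ : IsPosRoot n γ) (hpos : SuccG (sweepPos n D k) γ) :
    stateAfter n D k γ = none ↔ Admissible n D (wStep n D k) γ :=
  (sweepInv_and_tracksMarks hn hD hk).2 γ hγ hpos

theorem admissible_xiRoot (hn : 1 ≤ n) (hD : IsBasic n D) {i j : ℕ} (hij : i < j)
    (hj : j ≤ numSteps n D) : Admissible n D (wStep n D i) (xiRoot n D j) := by
  obtain ⟨k, rfl⟩ := Nat.exists_eq_add_of_lt hij
  obtain ⟨hξ, hahead⟩ := xiRoot_succ_spec hj
  obtain ⟨hpos, hnone⟩ := ahead_unmarked_of_le (Nat.le_add_right i k) (Nat.le_of_succ_le hj) hahead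
  exact (stateAfter_eq_none_iff hn hD (hij.le.trans hj) hξ hpos).1 hnone

theorem wStep_numSteps_eq_wD (hn : 1 ≤ n) (hD : IsBasic n D) {j : ℕ} (hj : 1 ≤ j) (hjn : j ≤ n) :
    wStep n D (numSteps n D) j = wD n D j := by
  obtain ⟨hinv, -⟩ := sweepInv_and_tracksMarks hn hD (le_refl (numSteps n D))
  have hfinal : SweepInv n D (n + 1) n (wStep n D (numSteps n D)) := by
    have hb := hinv.col_lt_row
    have ha := hinv.row_le
    refine hinv.advance hD (by omega) n.lt_succ_self le_rfl le_rfl fun γ hγ hpos _ => ?_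
    rw [← stateAfter_eq_none_iff hn hD le_rfl hγ hpos]
    exact stateAfter_numSteps_ne_none hγ hpos
  rcases hjn.eq_or_lt with rfl | hlt
  · exact hfinal.apply_col_eq_wD hD
  · exact hfinal.apply_eq_wD j hj hlt

end Sweep

/-- with `C(D) = {ξ_1 ≻ … ≻ ξ_c}` and `w_i = r_{ξ_1} ⋯ r_{ξ_i}`:
(a) `w_D = r_{ξ_1} ∘ ⋯ ∘ r_{ξ_c}` (on `{1,…,n}`);
(b) `w_i(ξ_j) > 0` for all `1 ≤ i < j ≤ c`;
(c) `ξ_j ∉ M(D)` for all `1 ≤ j ≤ c`;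
(d) each `ξ_j` is the `≻`-greatest positive root `ξ` with `ξ ≺ ξ_{j-1}`
(no constraint when `j = 1`), `ξ ∉ M(D)`, and `w_i(ξ) > 0` for all `1 ≤ i < j`. -/
theorem stmt11 (n : ℕ) (hn : 2 ≤ n) (D : Set (ℕ × ℕ)) (hD : IsBasic n D) :
    (∀ j : ℕ, 1 ≤ j → j ≤ n → wStep n D (numSteps n D) j = wD n D j) ∧
    (∀ i j : ℕ, 1 ≤ i → i < j → j ≤ numSteps n D →
      PosUnder (wStep n D i) (xiRoot n D j)) ∧
    (∀ j : ℕ, 1 ≤ j → j ≤ numSteps n D → xiRoot n D j ∉ MD n D) ∧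
    (∀ j : ℕ, 1 ≤ j → j ≤ numSteps n D →
      ((IsPosRoot n (xiRoot n D j) ∧
        (2 ≤ j → SuccG (xiRoot n D (j - 1)) (xiRoot n D j)) ∧
        xiRoot n D j ∉ MD n D ∧
        (∀ i, 1 ≤ i → i < j → PosUnder (wStep n D i) (xiRoot n D j))) ∧
      ∀ ξ : ℕ × ℕ, IsPosRoot n ξ →
        (2 ≤ j → SuccG (xiRoot n D (j - 1)) ξ) →
        ξ ∉ MD n D →
        (∀ i, 1 ≤ i → i < j → PosUnder (wStep n D i) ξ) →
        ξ = xiRoot n D j ∨ SuccG (xiRoot n D j) ξ)) := by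
  have hn1 : 1 ≤ n := Nat.one_le_of_lt hn
  have hadm {i j : ℕ} : i < j → j ≤ numSteps n D → Admissible n D (wStep n D i) (xiRoot n D j) :=
    admissible_xiRoot hn1 hD
  refine ⟨fun j => wStep_numSteps_eq_wD hn1 hD, fun i j _ hij hj => (hadm hij hj).2,
    fun j h1 hj => (hadm h1 hj).1, fun j h1 hj => ?_⟩
  obtain ⟨k, rfl⟩ := Nat.exists_eq_add_of_le' h1
  obtain ⟨hξ, hpos, -⟩ := xiRoot_succ_spec hj
  refine ⟨⟨hξ, fun hk => sweepPos_of_pos (Nat.le_of_succ_le_succ hk) ▸ hpos, (hadm h1 hj).1,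
    fun i _ hij => (hadm hij hj).2⟩, fun γ hγ hsucc hM hγpos => ?_⟩
  have hahead : SuccG (sweepPos n D k) γ ∧ PosUnder (wStep n D k) γ := by
    rcases Nat.eq_zero_or_pos k with rfl | hk
    · exact ⟨hγ.sweepPos_zero_succG, hγ.2.1⟩
    · exact ⟨sweepPos_of_pos hk ▸ hsucc (Nat.succ_le_succ hk), hγpos k hk k.lt_succ_self⟩
  exact eq_or_xiRoot_succ_succG hj hγ hahead.1
    ((stateAfter_eq_none_iff hn1 hD (Nat.le_of_succ_le hj) hγ hahead.1).2 ⟨hM, hahead.2⟩)
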